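/- Let n ≥ 3, let 𝒜 = {[A₁],…,[A_r]} be a malnormal subgroup system of F_n, with L, Γ_i, 𝒞 and F_n − 𝒜 as in the context, and let g ∈ F_n be non-𝒜-peripheral and not a proper power. Then: (1) g^{+∞} ≠ g^{-∞} and the class {g^{+∞}, g^{-∞}} is a point of ∂²(F_n,𝒜); (2) for every w ∈ F_n − 𝒜 and every g' ∈ F_n, only finitely many points of the F_n-orbit of {g^{+∞}, g^{-∞}} lie in g'·C(γ_w); consequently, the counting measure η_g = Σ_{p ∈ F_n·{g^{+∞},g^{-∞}}} δ_p on ∂²(F_n,𝒜) is an F_n-invariant Radon measure, i.e. a relative current on (F_n,𝒜). -/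

import Mathlib

/-!
The proof works in the Cayley tree with one elementary fact (`take_mul`): right multiplication by
`u` changes only the last `|u|` letters of a reduced word. Hence a sequence of vertices with bounded
steps that stays far from `1` keeps a constant prefix.

*Limits.* Since `F n` is torsion-free and balls are finite, `|g ^ k|` tends to infinity, so the
prefixes of `g ^ k` stabilize and `g^{±∞}` exist. Moreover every prefix of `g^{+∞}` is close to some
`g ^ j` with `j ≥ 0` (`IsPosLimit.near`). If `g^{+∞} = g^{-∞}`, this puts arbitrarily large powers
of `g` in a fixed ball, which is impossible (`posLimit_ne`). The boundary action is compatible with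
convergence (`Tends.mul_left`), so `h · g^{+∞} = (h g h⁻¹)^{+∞}`.

*Membership in `∂²(F_n,𝒜)`.* If `g^{+∞}` is in the limit set of a conjugate `B` of some `A i`, then
quasi-convexity of `B` (`quasiconvex`) and the pigeonhole principle give `k ≥ 1` with `g ^ k ∈ B`
(`exists_pow_mem`), and malnormality gives `g ∈ B`, contradicting non-peripherality (`mem_relSet`).

*Local finiteness.* Let `sepSet N` be the open set of classes whose endpoints differ among the first
`N` letters. If `h · {g^{+∞}, g^{-∞}} ∈ sepSet N`, some vertex `h g ^ k` has length at most
`N + |g|`, and `g ^ k` fixes `{g^{+∞}, g^{-∞}}`; so only finitely many orbit points lie in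
`sepSet N` (`orbit_finite`). A translated cylinder `g' · C(γ_w)` is contained in
`sepSet (|g'| + 1)` (`cyl_subset`). The sets `sepSet N` form an increasing open cover of
`∂²(F_n,𝒜)`, so every subset of the orbit is closed and the orbit meets compact sets in finite
sets, which makes its counting measure regular (`count_regular`).
-/

open scoped Classical
open MeasureTheory

noncomputable section

namespace RelCurr

/-- The alphabet `𝔄 = ℬ ∪ ℬ⁻¹`: a letter is a generator together with a sign. -/
abbrev Letter (n : ℕ) := Fin n × Bool

/-- The inverse of a letter. -/
def linv {n : ℕ} (x : Letter n) : Letter n := (x.1, !x.2)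

/-- The free group of rank `n` on the basis `Fin n`. -/
abbrev F (n : ℕ) := FreeGroup (Fin n)

/-- The reduced word of an element of `F n`. -/
def rword {n : ℕ} (g : F n) : List (Letter n) := FreeGroup.toWord g

/-- The length `|g|` of the reduced word of `g`. -/
def wlen {n : ℕ} (g : F n) : ℕ := (rword g).length

/-- The single-letter element of `F n` given by a letter. -/
def letterE {n : ℕ} (b : Letter n) : F n := FreeGroup.mk [b]

/-- The conjugate subgroup `g A g⁻¹`. -/
def conjSub {n : ℕ} (g : F n) (A : Subgroup (F n)) : Subgroup (F n) :=
  Subgroup.map (MulAut.conj g).toMonoidHom A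

/-- A subgroup `A` is malnormal if `xAx⁻¹ ∩ A = {1}` for every `x ∉ A`. -/
def Malnormal {n : ℕ} (A : Subgroup (F n)) : Prop :=
  ∀ x : F n, x ∉ A → conjSub x A ⊓ A = ⊥

/-- The word metric on the Cayley tree `T`. -/
def dist' {n : ℕ} (x y : F n) : ℕ := wlen (x⁻¹ * y)

/-- The cyclically reduced length of `a`. -/
def cycLen {n : ℕ} (a : F n) : ℕ := sInf { m | ∃ h : F n, wlen (h⁻¹ * a * h) = m }

/-- The vertex set of the minimal `A`-invariant subtree `T_A` of the Cayley tree: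
the union of the axes of the nontrivial elements of `A`. -/
def treeVerts {n : ℕ} (A : Subgroup (F n)) : Set (F n) :=
  { h | ∃ a ∈ A, a ≠ 1 ∧ wlen (h⁻¹ * a * h) = cycLen a }

/-- `γ_w ⊆ S`: every prefix of the reduced word of `w` lies in the vertex set `S`. -/
def pathIn {n : ℕ} (w : F n) (S : Set (F n)) : Prop :=
  ∀ m ≤ wlen w, FreeGroup.mk ((rword w).take m) ∈ S

/-- An element is cyclically reduced if the last letter of its reduced word is not the
inverse of the first letter. -/
def CyclicallyReduced {n : ℕ} (w : F n) : Prop :=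
  ∀ x y : Letter n, (rword w).head? = some x → (rword w).getLast? = some y → y ≠ linv x

/-- `v` is a length-one extension of `w`. -/
def LengthOneExt {n : ℕ} (w v : F n) : Prop :=
  ∃ b : Letter n, v = w * letterE b ∧ wlen v = wlen w + 1

/-- `a` is an extension of `w`: the reduced word of `w` is a proper prefix of that of `a`. -/
def ExtensionOf {n : ℕ} (w a : F n) : Prop :=
  rword w <+: rword a ∧ wlen w < wlen a

/-- `g` is a proper power. -/
def IsProperPower {n : ℕ} (g : F n) : Prop := ∃ (h : F n) (k : ℕ), 2 ≤ k ∧ g = h ^ k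

section System

variable {n r : ℕ} (A : Fin r → Subgroup (F n))

/-- `[B] ∈ 𝒜`, i.e. `B` is a conjugate of one of the subgroups of the system. -/
def InSystem (B : Subgroup (F n)) : Prop := ∃ (i : Fin r) (g : F n), B = conjSub g (A i)

/-- The family `A` represents a subgroup system: finite rank subgroups distinct
from `{1}` and `F n`. -/
def IsSystem : Prop := (∀ i, (A i).FG) ∧ (∀ i, A i ≠ ⊥) ∧ (∀ i, A i ≠ ⊤)

/-- The subgroup system is malnormal. -/
def SystemMalnormal : Prop :=
  (∀ i, Malnormal (A i)) ∧
  ∀ B₁ B₂ : Subgroup (F n), InSystem A B₁ → InSystem A B₂ → B₁ ≠ B₂ → B₁ ⊓ B₂ = ⊥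

/-- `g` is `𝒜`-peripheral: trivial or contained in a conjugate of one of the `A i`. -/
def Peripheral (g : F n) : Prop := g = 1 ∨ ∃ B, InSystem A B ∧ g ∈ B

/-- The diameter of the intersection of the trees of two distinct subgroups of the
system is at most `L`. -/
def DiamBound (L : ℕ) : Prop :=
  ∀ B₁ B₂ : Subgroup (F n), InSystem A B₁ → InSystem A B₂ → B₁ ≠ B₂ →
    ∀ x ∈ treeVerts B₁ ∩ treeVerts B₂, ∀ y ∈ treeVerts B₁ ∩ treeVerts B₂, dist' x y ≤ L

/-- `B ∈ Γ_i`: `B` is a conjugate of `A i` whose tree contains the base point `1`. -/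
def GammaMem (i : Fin r) (B : Subgroup (F n)) : Prop :=
  (∃ g : F n, B = conjSub g (A i)) ∧ (1 : F n) ∈ treeVerts B

/-- The finite set `𝒞` of words of length `L+2` whose path is contained in no tree
`T_B` with `B ∈ Γ_i`, for every `i`. -/
def Ccal (L : ℕ) : Set (F n) :=
  { w | wlen w = L + 2 ∧ ∀ (i : Fin r) (B : Subgroup (F n)), GammaMem A i B →
      ¬ pathIn w (treeVerts B) }

/-- `F_n − 𝒜`: the words containing an element of `𝒞` as a contiguous subword. -/
def FmA (L : ℕ) : Set (F n) := { w | ∃ x ∈ Ccal A L, rword x <:+: rword w }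

/-- `S_k`: words of length `k` not containing any element of `𝒞` as a subword. -/
def Sk (L k : ℕ) : Set (F n) := { w | wlen w = k ∧ w ∉ FmA A L }

end System

/-! ### The boundary of `F n` -/

/-- An infinite reduced word. -/
def IsRed {n : ℕ} (ξ : ℕ → Letter n) : Prop := ∀ i, ξ (i + 1) ≠ linv (ξ i)

/-- The Gromov boundary `∂F_n`, realized as the space of infinite reduced words,
topologized as a subspace of the product space. -/
def Boundary (n : ℕ) : Type := { ξ : ℕ → Letter n // IsRed ξ }

instance {n : ℕ} : TopologicalSpace (Boundary n) :=
  instTopologicalSpaceSubtype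

/-- The length-`m` prefix of a boundary point. -/
def bpre {n : ℕ} (ξ : Boundary n) (m : ℕ) : List (Letter n) :=
  (List.range m).map ξ.1

/-- The reduced word of `w` is a prefix of the infinite word `ξ`. -/
def wordPrefixOf {n : ℕ} (w : F n) (ξ : Boundary n) : Prop :=
  bpre ξ (wlen w) = rword w

/-- The boundary (limit set) `∂A ⊆ ∂F_n` of a subgroup `A`. -/
def limitSet {n : ℕ} (A : Subgroup (F n)) : Set (Boundary n) :=
  { ξ | ∀ m : ℕ, ∃ a ∈ A, bpre ξ m <+: rword a }

/-- `ξ = g^{+∞}`: `ξ` is the limit of the reduced words of the powers of `g`. -/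
def IsPosLimit {n : ℕ} (g : F n) (ξ : Boundary n) : Prop :=
  ∀ m : ℕ, ∃ N : ℕ, ∀ k ≥ N, bpre ξ m <+: rword (g ^ k)

/-- The number of letters cancelled when concatenating the word `l` with the
infinite reduced word `ξ`. -/
def cancelLen {n : ℕ} (l : List (Letter n)) (ξ : ℕ → Letter n) : ℕ :=
  sSup { j | j ≤ l.length ∧ ∀ i < j, l.reverse[i]? = some (linv (ξ i)) }

/-- The sequence underlying the action of `g` on a boundary point: left multiplication
followed by cancellation. -/
def actSeq {n : ℕ} (g : F n) (ξ : ℕ → Letter n) : ℕ → Letter n :=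
  fun m =>
    if h : m < (rword g).length - cancelLen (rword g) ξ then
      (rword g).get ⟨m, by omega⟩
    else ξ (m - ((rword g).length - cancelLen (rword g) ξ) + cancelLen (rword g) ξ)

/-- The action of `F n` on its boundary: left multiplication followed by cancellation.
(The sequence `actSeq g ξ.1` is always reduced, so the first branch always applies.) -/
def bAct {n : ℕ} (g : F n) (ξ : Boundary n) : Boundary n :=
  if h : IsRed (actSeq g ξ.1) then ⟨actSeq g ξ.1, h⟩ else ξ

/-! ### The double boundary -/

/-- The diagonal action of `F n` on `Sym2 (∂F_n)`, whose restriction to the set of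
non-diagonal classes is the action on the double boundary `∂²F_n`. -/
def dbAct {n : ℕ} (g : F n) : Sym2 (Boundary n) → Sym2 (Boundary n) := Sym2.map (bAct g)

/-- `∂²𝒜`: the classes `{ξ,η}` with both endpoints in `g·∂A_i = ∂(gA_ig⁻¹)` for some
`i` and `g`. -/
def dblBndA {n r : ℕ} (A : Fin r → Subgroup (F n)) : Set (Sym2 (Boundary n)) :=
  { z | ∃ (i : Fin r) (g : F n) (ξ η : Boundary n), z = s(ξ, η) ∧
      ξ ∈ limitSet (conjSub g (A i)) ∧ η ∈ limitSet (conjSub g (A i)) }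

/-- The double boundary `∂²(F_n,𝒜)` of `F n` relative to `𝒜`, as a subset of
`Sym2 (∂F_n)`: non-diagonal classes not lying in `∂²𝒜`. -/
def relSet {n r : ℕ} (A : Fin r → Subgroup (F n)) : Set (Sym2 (Boundary n)) :=
  { z | ¬ z.IsDiag } \ dblBndA A

/-- The cylinder set `C(γ_w) ⊆ ∂²F_n` of the geodesic path from `1` to `w`. -/
def cylinder {n : ℕ} (w : F n) : Set (Sym2 (Boundary n)) :=
  { z | ∃ ξ η : Boundary n, z = s(ξ, η) ∧ ξ.1 0 ≠ η.1 0 ∧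
      (wordPrefixOf w ξ ∨ wordPrefixOf w η) }

instance {n : ℕ} : MeasurableSpace (Sym2 (Boundary n)) := borel _

/-- The action of `g ∈ F n` on `∂²(F_n,𝒜)`. (The action of `F n` preserves
`∂²(F_n,𝒜)`, so the first branch always applies.) -/
def relAct {n r : ℕ} (A : Fin r → Subgroup (F n)) (g : F n) (z : ↥(relSet A)) :
    ↥(relSet A) :=
  if h : dbAct g z.1 ∈ relSet A then ⟨dbAct g z.1, h⟩ else z

/-- The cylinder `C(γ_w)` as a subset of `∂²(F_n,𝒜)`. -/
def relCyl {n r : ℕ} (A : Fin r → Subgroup (F n)) (w : F n) : Set ↥(relSet A) :=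
  Subtype.val ⁻¹' cylinder w

/-- The translated cylinder `g·C(γ_w)` as a subset of `∂²(F_n,𝒜)`. -/
def relCylG {n r : ℕ} (A : Fin r → Subgroup (F n)) (g w : F n) : Set ↥(relSet A) :=
  Subtype.val ⁻¹' (dbAct g '' cylinder w)

/-- A relative current on `(F_n,𝒜)`: an `F_n`-invariant Radon measure on the
locally compact space `∂²(F_n,𝒜)` (finite on compacts, outer regular, inner regular
on open sets). -/
def IsRelCurrent {n r : ℕ} (A : Fin r → Subgroup (F n)) (μ : Measure ↥(relSet A)) : Prop :=
  (∀ (g : F n) (s : Set ↥(relSet A)), MeasurableSet s → μ (relAct A g ⁻¹' s) = μ s) ∧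
  μ.Regular

/-- The `F_n`-orbit of a point of `Sym2 (∂F_n)`, inside `∂²(F_n,𝒜)`. -/
def orbitOf {n r : ℕ} (A : Fin r → Subgroup (F n)) (z : Sym2 (Boundary n)) :
    Set ↥(relSet A) :=
  { y | ∃ h : F n, (y : Sym2 (Boundary n)) = dbAct h z }


/-! ### Word length and prefixes in the free group -/

lemma rword_red {n : ℕ} (x : F n) : FreeGroup.IsReduced (rword x) := FreeGroup.isReduced_toWord

lemma mk_rword {n : ℕ} (x : F n) : FreeGroup.mk (rword x) = x := FreeGroup.mk_toWord

lemma rword_mk {n : ℕ} {l : List (Letter n)} (h : FreeGroup.IsReduced l) :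
    rword (FreeGroup.mk l) = l := by
  unfold rword
  rw [FreeGroup.toWord_mk, h.reduce_eq]

lemma wlen_inv {n : ℕ} (x : F n) : wlen x⁻¹ = wlen x := FreeGroup.norm_inv_eq

lemma wlen_mul_le {n : ℕ} (x y : F n) : wlen (x * y) ≤ wlen x + wlen y :=
  FreeGroup.norm_mul_le x y

lemma wlen_mk_le {n : ℕ} (l : List (Letter n)) : wlen (FreeGroup.mk l) ≤ l.length :=
  FreeGroup.norm_mk_le

lemma wlen_pow_le {n : ℕ} (x : F n) (k : ℕ) : wlen (x ^ k) ≤ k * wlen x := by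
  induction k with
  | zero => simp [wlen, rword]
  | succ k ih =>
    rw [pow_succ]
    calc _ ≤ wlen (x ^ k) + wlen x := wlen_mul_le _ _
      _ ≤ _ := by linarith

/-- Balls in the Cayley tree are finite. -/
lemma finite_ball {n : ℕ} (R : ℕ) : {x : F n | wlen x ≤ R}.Finite := by
  have h : {l : List (Letter n) | l.length ≤ R}.Finite := List.finite_length_le _ _
  exact h.preimage (f := rword) FreeGroup.toWord_injective.injOn

lemma mul_letter {n : ℕ} (x : F n) (b : Letter n) :
    rword (x * FreeGroup.mk [b]) = rword x ++ [b] ∨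
      ∃ c, rword x = rword (x * FreeGroup.mk [b]) ++ [c] := by
  rcases List.eq_nil_or_concat (rword x) with h | ⟨l, c, h⟩
  · left
    have hx : x = 1 := FreeGroup.toWord_eq_nil_iff.1 h
    subst hx
    rw [one_mul, rword_mk FreeGroup.IsReduced.singleton, h]
    rfl
  · have hx : x = FreeGroup.mk (l ++ [c]) := by rw [← mk_rword x, h]; simp
    have hred := rword_red x
    have hl : FreeGroup.IsReduced l := hred.infix ⟨[], [c], by rw [h]; simp⟩
    by_cases hcb : c.1 = b.1 → c.2 = b.2
    · left
      rw [h] at hred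
      rw [h, hx, FreeGroup.mul_mk]
      simp only [List.concat_eq_append] at hred ⊢
      refine rword_mk (FreeGroup.IsReduced.append_overlap hred ?_ (by simp))
      simpa [FreeGroup.IsReduced] using hcb
    · right
      refine ⟨c, ?_⟩
      have hb : x * FreeGroup.mk [b] = FreeGroup.mk l := by
        push Not at hcb
        rw [hx, ← FreeGroup.mul_mk, mul_assoc, FreeGroup.mul_mk]
        have hc : FreeGroup.mk ([c] ++ [b]) = 1 := by
          obtain ⟨c1, c2⟩ := c
          obtain ⟨b1, b2⟩ := b
          simp only at hcb
          obtain ⟨rfl, h2⟩ := hcb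
          have : b2 = !c2 := by cases b2 <;> cases c2 <;> simp_all
          subst this
          exact Quot.sound (FreeGroup.Red.Step.not (L₁ := []) (L₂ := []))
        rw [hc, mul_one]
      rw [hb, rword_mk hl, h]
      simp

lemma take_mul_mk {n : ℕ} (N : ℕ) (u : List (Letter n)) :
    ∀ x : F n, N + u.length ≤ wlen x →
      (rword (x * FreeGroup.mk u)).take N = (rword x).take N := by
  induction u with
  | nil => intro x _; rw [← FreeGroup.one_eq_mk, mul_one]
  | cons b u ih =>
    intro x hx
    have e : x * FreeGroup.mk (b :: u) = (x * FreeGroup.mk [b]) * FreeGroup.mk u := by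
      rw [mul_assoc, FreeGroup.mul_mk]; rfl
    simp only [List.length_cons] at hx
    rw [e]
    unfold wlen at hx ih
    rcases mul_letter x b with h | ⟨c, h⟩
    · rw [ih _ (by rw [h, List.length_append]; omega), h, List.take_append_of_le_length (by omega)]
    · have hl := congrArg List.length h
      simp only [List.length_append, List.length_cons, List.length_nil] at hl
      rw [ih _ (by omega)]
      conv_rhs => rw [h]
      rw [List.take_append_of_le_length (by omega)]

/-- Right multiplication by `u` changes only the last `|u|` letters of the reduced word. -/
lemma take_mul {n : ℕ} (N : ℕ) (x u : F n) (h : N + wlen u ≤ wlen x) :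
    (rword (x * u)).take N = (rword x).take N := by
  conv_lhs => rw [← mk_rword u]
  exact take_mul_mk N _ x h

/-- Quasi-convexity: let `M` be the submonoid generated by elements of length at most `R`. Writing
`a ∈ M` as a product of generators gives a path from `1` to `a` through elements of `M` with steps
of length at most `R`, so every vertex of the geodesic from `1` to `a` is `R`-close to `M`. -/
lemma quasiconvex {n : ℕ} (S : Set (F n)) (R : ℕ) (hS : ∀ s ∈ S, wlen s ≤ R)
    (a : F n) (ha : a ∈ Submonoid.closure S) (v : List (Letter n)) (hv : v <+: rword a) :
    ∃ b ∈ Submonoid.closure S, wlen (b⁻¹ * FreeGroup.mk v) ≤ R := by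
  induction ha using Submonoid.closure_induction_right with
  | one =>
    refine ⟨1, one_mem _, ?_⟩
    have : v = [] := by simpa [rword] using hv
    subst this
    simp [← FreeGroup.one_eq_mk, wlen, rword]
  | mul_right a ha s hs ih =>
    by_cases h : v.length + wlen s ≤ wlen (a * s)
    · apply ih
      have h2 := take_mul v.length (a * s) s⁻¹ (by rwa [wlen_inv])
      rw [mul_inv_cancel_right] at h2
      rw [List.prefix_iff_eq_take] at hv ⊢
      rw [h2]; exact hv
    · refine ⟨a * s, mul_mem ha (Submonoid.subset_closure hs), ?_⟩
      obtain ⟨t, ht⟩ := hv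
      have e : (a * s)⁻¹ * FreeGroup.mk v = (FreeGroup.mk t)⁻¹ := by
        have : a * s = FreeGroup.mk v * FreeGroup.mk t := by
          rw [FreeGroup.mul_mk, ht, mk_rword]
        rw [this]; group
      rw [e, wlen_inv]
      have hl := congrArg List.length ht
      rw [List.length_append] at hl
      have := wlen_mk_le t
      have := hS s hs
      unfold wlen at *
      omega

/-- Only finitely many powers of a nontrivial element lie in a given ball. -/
lemma pow_bounded {n : ℕ} {g : F n} (hg : g ≠ 1) (R : ℕ) :
    ∃ J : ℕ, ∀ k : ℕ, wlen (g ^ k) ≤ R → k ≤ J := by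
  have hinj : Function.Injective (fun k : ℕ => g ^ k) := by
    apply injective_pow_iff_not_isOfFinOrder.2
    intro h
    exact hg ((isOfFinOrder_iff_eq_one g).1 h)
  have := (finite_ball (n := n) R).preimage (f := fun k : ℕ => g ^ k) hinj.injOn
  obtain ⟨J, hJ⟩ := this.bddAbove
  exact ⟨J, fun k hk => hJ hk⟩

/-! ### Convergence to boundary points -/

/-- The sequence `x` of vertices of the Cayley tree converges to the boundary point `ξ`. -/
def Tends {n : ℕ} (x : ℕ → F n) (ξ : Boundary n) : Prop :=
  ∀ m : ℕ, ∃ N : ℕ, ∀ k ≥ N, bpre ξ m <+: rword (x k)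

lemma bpre_length {n : ℕ} (ξ : Boundary n) (m : ℕ) : (bpre ξ m).length = m := by
  simp [bpre]

lemma bpre_succ {n : ℕ} (ξ : Boundary n) (m : ℕ) : bpre ξ (m + 1) = bpre ξ m ++ [ξ.1 m] := by
  simp [bpre, List.range_succ]

lemma bpre_getElem {n : ℕ} (ξ : Boundary n) (m i : ℕ) (h : i < (bpre ξ m).length) :
    (bpre ξ m)[i] = ξ.1 i := by
  simp [bpre]

lemma ne_linv {n : ℕ} (a b : Letter n) : b ≠ linv a ↔ (a.1 = b.1 → a.2 = b.2) := by
  obtain ⟨a1, a2⟩ := a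
  obtain ⟨b1, b2⟩ := b
  simp only [linv, ne_eq, Prod.mk.injEq, not_and]
  constructor
  · intro h e
    have := h e.symm
    cases a2 <;> cases b2 <;> simp_all
  · intro h e
    have := h e.symm
    cases a2 <;> cases b2 <;> simp_all

lemma bpre_red {n : ℕ} (ξ : Boundary n) (m : ℕ) : FreeGroup.IsReduced (bpre ξ m) := by
  rw [FreeGroup.IsReduced, List.isChain_iff_getElem]
  intro i hi
  rw [bpre_getElem, bpre_getElem]
  exact (ne_linv _ _).1 (ξ.2 i)

lemma bpre_eq_iff {n : ℕ} (ξ η : Boundary n) (m : ℕ) :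
    bpre ξ m = bpre η m ↔ ∀ i < m, ξ.1 i = η.1 i := by
  simp [bpre]

lemma bpre_take {n : ℕ} (ξ : Boundary n) {m m' : ℕ} (h : m ≤ m') :
    (bpre ξ m').take m = bpre ξ m := by
  simp [bpre, ← List.map_take, List.take_range, h]

lemma bpre_inj {n : ℕ} {ξ η : Boundary n} (h : ∀ m, bpre ξ m = bpre η m) : ξ = η :=
  Subtype.ext (funext fun i => (bpre_eq_iff ξ η (i + 1)).1 (h _) i (Nat.lt_succ_self i))

lemma Tends.unique {n : ℕ} {x : ℕ → F n} {ξ η : Boundary n} (h1 : Tends x ξ) (h2 : Tends x η) :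
    ξ = η := by
  apply bpre_inj
  intro m
  obtain ⟨N, hN⟩ := h1 m
  obtain ⟨N', hN'⟩ := h2 m
  have a := List.prefix_iff_eq_take.1 (hN (max N N') (le_max_left _ _))
  have b := List.prefix_iff_eq_take.1 (hN' (max N N') (le_max_right _ _))
  rw [bpre_length] at a b
  rw [a, b]

lemma tends_bpre {n : ℕ} (ξ : Boundary n) : Tends (fun k => FreeGroup.mk (bpre ξ k)) ξ := by
  intro m
  refine ⟨m, fun k hk => ?_⟩
  rw [rword_mk (bpre_red ξ k), List.prefix_iff_eq_take, bpre_length, bpre_take ξ hk]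

lemma Tends.mul_right {n : ℕ} {x : ℕ → F n} {ξ : Boundary n} (h : Tends x ξ) (u : F n) :
    Tends (fun k => x k * u) ξ := by
  intro m
  obtain ⟨N, hN⟩ := h (m + wlen u)
  refine ⟨N, fun k hk => ?_⟩
  have h1 := hN k hk
  have hl := h1.length_le
  rw [bpre_length] at hl
  rw [List.prefix_iff_eq_take] at h1 ⊢
  rw [bpre_length] at h1 ⊢
  rw [take_mul m _ _ hl, ← bpre_take ξ (Nat.le_add_right m (wlen u)), h1, List.take_take]
  simp

/-- The powers of a nontrivial element converge: since their lengths tend to infinity and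
consecutive ones are at bounded distance, their length-`m` prefixes stabilize. -/
lemma exists_posLimit {n : ℕ} {g : F n} (hg : g ≠ 1) : ∃ ξ, IsPosLimit g ξ := by
  have key : ∀ m : ℕ, ∃ N : ℕ, ∀ k ≥ N,
      m ≤ wlen (g ^ k) ∧ (rword (g ^ k)).take m = (rword (g ^ N)).take m := by
    intro m
    obtain ⟨J, hJ⟩ := pow_bounded hg (m + wlen g)
    have hlen : ∀ k ≥ J + 1, m + wlen g ≤ wlen (g ^ k) := by
      intro k hk
      by_contra hcon
      have := hJ k (by omega)
      omega
    refine ⟨J + 1, fun k hk => ?_⟩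
    induction k, hk using Nat.le_induction with
    | base => exact ⟨(Nat.le_add_right _ _).trans (hlen _ le_rfl), rfl⟩
    | succ k hk ih =>
      refine ⟨(Nat.le_add_right _ _).trans (hlen _ (by omega)), ?_⟩
      rw [pow_succ, take_mul m _ _ (hlen k hk)]
      exact ih.2
  choose N hN using key
  -- the `i`-th letter of the limit is read off from a power whose first `i + 1` letters are stable
  have hlt : ∀ i, i < (rword (g ^ N (i + 1))).length := fun i => (hN (i + 1) _ le_rfl).1
  let ξ : ℕ → Letter n := fun i => (rword (g ^ N (i + 1)))[i]'(hlt i)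
  have hξ : ∀ i, ∀ k ≥ N (i + 1), (rword (g ^ k))[i]? = some (ξ i) := by
    intro i k hk
    have h := congrArg (fun l => l[i]?) (hN (i + 1) k hk).2
    simp only [List.getElem?_take, Nat.lt_succ_self, if_true] at h
    rw [h]
    exact List.getElem?_eq_getElem (hlt i)
  have hred : IsRed ξ := by
    intro i
    let k := max (N (i + 1)) (N (i + 1 + 1))
    have h1 := hξ i k (le_max_left _ _)
    have h2 := hξ (i + 1) k (le_max_right _ _)
    have hr := rword_red (g ^ k)
    rw [FreeGroup.IsReduced, List.isChain_iff_getElem] at hr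
    obtain ⟨_, e1⟩ := List.getElem?_eq_some_iff.1 h1
    obtain ⟨l2, e2⟩ := List.getElem?_eq_some_iff.1 h2
    have := hr i l2
    rw [e1, e2] at this
    exact (ne_linv _ _).2 this
  let ζ : Boundary n := ⟨ξ, hred⟩
  refine ⟨ζ, fun m => ?_⟩
  refine ⟨(Finset.range m).sup (fun i => N (i + 1)), fun k hk => ?_⟩
  rw [List.prefix_iff_getElem?]
  intro i hi
  rw [bpre_getElem]
  have hi : i < m := by simpa only [bpre_length] using hi
  exact hξ i k ((Finset.le_sup (f := fun i => N (i + 1)) (Finset.mem_range.2 hi)).trans hk)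

/-! ### The boundary action -/

lemma cancelLen_spec {n : ℕ} (l : List (Letter n)) (ξ : ℕ → Letter n) :
    cancelLen l ξ ≤ l.length ∧
    (∀ i < cancelLen l ξ, l.reverse[i]? = some (linv (ξ i))) ∧
    (cancelLen l ξ < l.length → l.reverse[cancelLen l ξ]? ≠ some (linv (ξ (cancelLen l ξ)))) := by
  set S := { j | j ≤ l.length ∧ ∀ i < j, l.reverse[i]? = some (linv (ξ i)) } with hS
  have hb : BddAbove S := ⟨l.length, fun j hj => hj.1⟩
  have hmem : cancelLen l ξ ∈ S := Nat.sSup_mem ⟨0, by simp [hS]⟩ hb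
  refine ⟨hmem.1, hmem.2, fun hlt heq => ?_⟩
  have : cancelLen l ξ + 1 ∈ S := by
    refine ⟨hlt, fun i hi => ?_⟩
    rcases Nat.lt_succ_iff_lt_or_eq.1 hi with h | h
    · exact hmem.2 i h
    · rw [h]; exact heq
  have h2 : cancelLen l ξ + 1 ≤ cancelLen l ξ := le_csSup hb this
  omega

/-- The part of `ξ` between the positions `c` and `m`. -/
def bmid {n : ℕ} (ξ : Boundary n) (c m : ℕ) : List (Letter n) := (List.range' c (m - c)).map ξ.1

lemma bpre_split {n : ℕ} (ξ : Boundary n) {c m : ℕ} (h : c ≤ m) :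
    bpre ξ m = bpre ξ c ++ bmid ξ c m := by
  unfold bpre bmid
  rw [← List.map_append, List.range_eq_range', List.range_eq_range']
  congr 1
  have := List.range'_append_1 (s := 0) (m := c) (n := m - c)
  rw [zero_add] at this
  rw [this]
  congr 1
  omega

/-- The word obtained from `h · ξ` by cancellation: the uncancelled part of `h`, followed by the
uncancelled part of the length-`m` prefix of `ξ`. -/
def actWord {n : ℕ} (h : F n) (ξ : Boundary n) (m : ℕ) : List (Letter n) :=
  (rword h).take ((rword h).length - cancelLen (rword h) ξ.1) ++
    bmid ξ (cancelLen (rword h) ξ.1) m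

lemma actWord_eq {n : ℕ} (h : F n) (ξ : Boundary n) (m : ℕ) :
    actWord h ξ m = (List.range ((rword h).length - cancelLen (rword h) ξ.1 +
      (m - cancelLen (rword h) ξ.1))).map (actSeq h ξ.1) := by
  set c := cancelLen (rword h) ξ.1 with hc
  apply List.ext_getElem
  · simp [actWord, bmid, ← hc]
  · intro i h1 h2
    simp only [List.getElem_map, List.getElem_range, actSeq, ← hc, actWord, bmid,
      List.getElem_append, List.length_take, List.getElem_range', List.getElem_take]
    have hmin : min ((rword h).length - c) (rword h).length = (rword h).length - c := by omega
    simp only [hmin]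
    split_ifs with h3
    · simp
    · exact congrArg ξ.1 (by omega)

lemma actWord_red {n : ℕ} (h : F n) (ξ : Boundary n) (m : ℕ) :
    FreeGroup.IsReduced (actWord h ξ m) := by
  obtain ⟨hc1, -, hc3⟩ := cancelLen_spec (rword h) ξ.1
  unfold actWord
  set c := cancelLen (rword h) ξ.1 with hc
  unfold FreeGroup.IsReduced
  rw [List.isChain_append]
  refine ⟨(rword_red h).infix (List.take_prefix _ _).isInfix, ?_, ?_⟩
  · rw [List.isChain_iff_getElem]
    intro i hi
    simp only [bmid, List.getElem_map, List.getElem_range', one_mul]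
    exact (ne_linv _ _).1 (ξ.2 (c + i))
  · intro x hx y hy
    have hy' : y = ξ.1 c := by
      unfold bmid at hy
      rcases Nat.eq_zero_or_pos (m - c) with h0 | h0
      · simp [h0] at hy
      · obtain ⟨d, hd⟩ := Nat.exists_eq_succ_of_ne_zero h0.ne'
        rw [hd] at hy
        simpa [List.range'_succ, eq_comm] using hy
    subst hy'
    rw [← ne_linv]
    by_cases hlt : c < (rword h).length
    · have h3 := hc3 hlt
      rw [List.getElem?_reverse hlt] at h3
      rw [List.getLast?_eq_getElem?, List.length_take, List.getElem?_take] at hx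
      have e : min ((rword h).length - c) (rword h).length - 1 = (rword h).length - 1 - c := by
        omega
      rw [e, if_pos (by omega)] at hx
      intro heq
      apply h3
      rw [hx, heq]
      simp [linv]
    · have : (rword h).length - c = 0 := by omega
      simp [this] at hx

lemma actSeq_red {n : ℕ} (h : F n) (ξ : Boundary n) : IsRed (actSeq h ξ.1) := by
  intro i
  have h1 := actWord_red h ξ (i + 2 + cancelLen (rword h) ξ.1)
  rw [actWord_eq, FreeGroup.IsReduced, List.isChain_iff_getElem] at h1
  have := h1 i (by simp; omega)
  simp only [List.getElem_map, List.getElem_range] at this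
  exact (ne_linv _ _).2 this

lemma actWord_eq_bpre {n : ℕ} (h : F n) (ξ : Boundary n) (m : ℕ) :
    actWord h ξ m = bpre (bAct h ξ) ((rword h).length - cancelLen (rword h) ξ.1 +
      (m - cancelLen (rword h) ξ.1)) := by
  have e : (bAct h ξ).1 = actSeq h ξ.1 := congrArg Subtype.val (dif_pos (actSeq_red h ξ))
  rw [actWord_eq, bpre, e]

lemma mul_bpre {n : ℕ} (h : F n) (ξ : Boundary n) (m : ℕ)
    (hm : cancelLen (rword h) ξ.1 ≤ m) :
    h * FreeGroup.mk (bpre ξ m) = FreeGroup.mk (actWord h ξ m) := by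
  obtain ⟨hc1, hc2, -⟩ := cancelLen_spec (rword h) ξ.1
  unfold actWord
  set c := cancelLen (rword h) ξ.1 with hc
  have hq : (rword h).drop ((rword h).length - c) = FreeGroup.invRev (bpre ξ c) := by
    rw [← List.reverse_inj]
    have : (FreeGroup.invRev (bpre ξ c)).reverse = (bpre ξ c).map linv := by
      simp [FreeGroup.invRev, linv]
    rw [this, List.reverse_drop]
    apply List.ext_getElem?
    intro i
    rw [List.getElem?_take, List.getElem?_map]
    have e : (rword h).length - ((rword h).length - c) = c := by omega
    rw [e]
    split_ifs with hi
    · rw [hc2 i hi, List.getElem?_eq_getElem (by rwa [bpre_length]), bpre_getElem]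
      rfl
    · rw [List.getElem?_eq_none (by rw [bpre_length]; omega)]
      rfl
  conv_lhs => rw [← mk_rword h, ← List.take_append_drop ((rword h).length - c) (rword h), hq,
    bpre_split ξ hm, ← FreeGroup.mul_mk, ← FreeGroup.mul_mk, ← FreeGroup.inv_mk]
  rw [← FreeGroup.mul_mk]
  group

lemma Tends.mul_left {n : ℕ} {x : ℕ → F n} {ξ : Boundary n} (hx : Tends x ξ) (h : F n) :
    Tends (fun k => h * x k) (bAct h ξ) := by
  intro m
  obtain ⟨hc1, -, -⟩ := cancelLen_spec (rword h) ξ.1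
  set c := cancelLen (rword h) ξ.1 with hc
  obtain ⟨N, hN⟩ := hx (m + c + 1)
  refine ⟨N, fun k hk => ?_⟩
  obtain ⟨t, ht⟩ := hN k hk
  have hmid : bmid ξ c (m + c + 1) ≠ [] := by
    intro h0
    have := congrArg List.length h0
    simp [bmid] at this
    omega
  have hred : FreeGroup.IsReduced (actWord h ξ (m + c + 1) ++ t) := by
    unfold actWord
    rw [← hc]
    refine FreeGroup.IsReduced.append_overlap ?_ ?_ hmid
    · exact actWord_red h ξ (m + c + 1)
    · refine (rword_red (x k)).infix ⟨bpre ξ c, [], ?_⟩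
      rw [← ht, bpre_split ξ (show c ≤ m + c + 1 by omega)]
      simp
  have e : h * x k = FreeGroup.mk (actWord h ξ (m + c + 1) ++ t) := by
    rw [← FreeGroup.mul_mk, ← mul_bpre h ξ _ (by omega), mul_assoc, FreeGroup.mul_mk, ht, mk_rword]
  simp only
  rw [e, rword_mk hred, actWord_eq_bpre, ← hc]
  refine List.IsPrefix.trans ?_ (List.prefix_append _ _)
  rw [List.prefix_iff_eq_take, bpre_length, bpre_take _ (by omega)]

lemma bAct_mul {n : ℕ} (g h : F n) (ξ : Boundary n) : bAct g (bAct h ξ) = bAct (g * h) ξ := by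
  have h1 := ((tends_bpre ξ).mul_left h).mul_left g
  have h2 := (tends_bpre ξ).mul_left (g * h)
  simp only [mul_assoc] at h2
  exact h1.unique h2

lemma bAct_one {n : ℕ} (ξ : Boundary n) : bAct 1 ξ = ξ := by
  have h1 := (tends_bpre ξ).mul_left 1
  simp only [one_mul] at h1
  exact h1.unique (tends_bpre ξ)

/-- The first letter of `h · ξ` depends only on the first `|h| + 1` letters of `ξ`. -/
lemma bAct_zero_congr {n : ℕ} (h : F n) (ξ η : Boundary n)
    (he : bpre ξ (wlen h + 1) = bpre η (wlen h + 1)) : (bAct h ξ).1 0 = (bAct h η).1 0 := by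
  have key : ∀ ζ : Boundary n, (rword (h * FreeGroup.mk (bpre ζ (wlen h + 1)))).head? =
      some ((bAct h ζ).1 0) := by
    intro ζ
    obtain ⟨hc1, -, -⟩ := cancelLen_spec (rword h) ζ.1
    have hc2 : cancelLen (rword h) ζ.1 ≤ wlen h + 1 := by unfold wlen; omega
    rw [mul_bpre h ζ _ hc2, rword_mk (actWord_red _ _ _), actWord_eq_bpre]
    have hpos : (rword h).length - cancelLen (rword h) ζ.1 +
      (wlen h + 1 - cancelLen (rword h) ζ.1) ≠ 0 := by unfold wlen; omega
    obtain ⟨d, hd⟩ := Nat.exists_eq_succ_of_ne_zero hpos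
    rw [hd]
    simp [bpre, List.range_succ_eq_map]
  have h1 := key ξ
  rw [he, key η] at h1
  exact (Option.some.inj h1).symm

lemma dbAct_mul {n : ℕ} (g h : F n) (z : Sym2 (Boundary n)) :
    dbAct g (dbAct h z) = dbAct (g * h) z := by
  induction z using Sym2.ind with
  | h ξ η => simp [dbAct, bAct_mul]

lemma dbAct_one {n : ℕ} (z : Sym2 (Boundary n)) : dbAct 1 z = z := by
  induction z using Sym2.ind with
  | h ξ η => simp [dbAct, bAct_one]

/-! ### Limits of powers and peripherality -/

lemma IsPosLimit.bAct_conj {n : ℕ} {g : F n} {ξ : Boundary n} (hξ : IsPosLimit g ξ) (h : F n) :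
    IsPosLimit (h * g * h⁻¹) (bAct h ξ) := by
  have h1 : Tends (fun k => g ^ k) ξ := hξ
  have h2 := (h1.mul_left h).mul_right h⁻¹
  intro m
  simp only [conj_pow]
  exact h2 m

/-- Elements commuting with `g` fix `g^{+∞}`. -/
lemma IsPosLimit.bAct_eq {n : ℕ} {g x : F n} {ξ : Boundary n} (hξ : IsPosLimit g ξ)
    (hc : Commute x g) : bAct x ξ = ξ := by
  have h := hξ.bAct_conj x
  rw [hc.eq, mul_inv_cancel_right] at h
  exact Tends.unique (x := fun k => g ^ k) h hξ

/-- Every prefix of `g^{+∞}` is at distance at most `|g|` from a nonnegative power `g ^ j`; the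
second bound shows that `j` tends to infinity with the length `m` of the prefix. -/
lemma IsPosLimit.near {n : ℕ} {g : F n} {ξ : Boundary n} (hξ : IsPosLimit g ξ) (m : ℕ) :
    ∃ j : ℕ, wlen ((g ^ j)⁻¹ * FreeGroup.mk (bpre ξ m)) ≤ wlen g ∧ m ≤ j * wlen g + wlen g := by
  obtain ⟨N, hN⟩ := hξ m
  obtain ⟨b, hb, hb'⟩ := quasiconvex {g} (wlen g) (fun s hs => by rw [Set.mem_singleton_iff.1 hs]) (g ^ N)
    (pow_mem (Submonoid.subset_closure (Set.mem_singleton g)) N) _ (hN N le_rfl)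
  obtain ⟨j, rfl⟩ := Submonoid.mem_closure_singleton.1 hb
  refine ⟨j, hb', ?_⟩
  have h1 : wlen (FreeGroup.mk (bpre ξ m)) = m := by
    unfold wlen
    rw [rword_mk (bpre_red ξ m), bpre_length]
  have h2 := wlen_mul_le (g ^ j) ((g ^ j)⁻¹ * FreeGroup.mk (bpre ξ m))
  rw [mul_inv_cancel_left, h1] at h2
  have h3 := wlen_pow_le g j
  omega

/-- If `g^{+∞} = g^{-∞}`, a far prefix of the common ray is close both to `g ^ j` and to
`g ^ (-i)`, so the large power `g ^ (i + j)` lies in a fixed ball. -/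
lemma posLimit_ne {n : ℕ} {g : F n} (hg : g ≠ 1) {ξ η : Boundary n} (hξ : IsPosLimit g ξ)
    (hη : IsPosLimit g⁻¹ η) : ξ ≠ η := by
  rintro rfl
  obtain ⟨J, hJ⟩ := pow_bounded hg (wlen g + wlen g)
  obtain ⟨j, hj1, hj2⟩ := hξ.near (J * wlen g + wlen g + 1)
  obtain ⟨i, hi1, -⟩ := hη.near (J * wlen g + wlen g + 1)
  set v := FreeGroup.mk (bpre ξ (J * wlen g + wlen g + 1))
  have e : g ^ (i + j) = ((g⁻¹ ^ i)⁻¹ * v) * ((g ^ j)⁻¹ * v)⁻¹ := by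
    rw [pow_add, inv_pow]; group
  have hle : i + j ≤ J := by
    apply hJ
    rw [e]
    refine (wlen_mul_le _ _).trans ?_
    rw [wlen_inv (_ * v)]
    rw [wlen_inv] at hi1
    omega
  have : j * wlen g ≤ J * wlen g := Nat.mul_le_mul_right _ (by omega)
  omega

/-- If `g^{+∞}` lies in the limit set of a finitely generated subgroup `B`, then infinitely many
powers of `g` are at bounded distance from `B`; by the pigeonhole principle two of them lie in
the same right coset of `B`. -/
lemma exists_pow_mem {n : ℕ} {g : F n} {ξ : Boundary n} (hξ : IsPosLimit g ξ)
    (B : Subgroup (F n)) (hB : B.FG) (hmem : ξ ∈ limitSet B) : ∃ k : ℕ, 0 < k ∧ g ^ k ∈ B := by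
  obtain ⟨S, hS⟩ := (Subgroup.fg_iff_submonoid_fg B).1 hB
  let R := S.sup wlen
  have hR : ∀ s ∈ (S : Set (F n)), wlen s ≤ R := fun s hs => Finset.le_sup (f := wlen) hs
  let K : Set ℕ := {k | ∃ b ∈ B, wlen (b⁻¹ * g ^ k) ≤ R + wlen g}
  have hK : K.Infinite := by
    rw [Set.infinite_iff_exists_gt]
    intro J
    obtain ⟨j, hj1, hj2⟩ := hξ.near (J * wlen g + wlen g + 1)
    obtain ⟨a, ha, hpre⟩ := hmem (J * wlen g + wlen g + 1)
    obtain ⟨b, hb, hb'⟩ := quasiconvex (S : Set (F n)) R hR a (by rw [hS]; exact ha) _ hpre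
    rw [hS] at hb
    refine ⟨j, ⟨b, hb, ?_⟩, ?_⟩
    · set v := FreeGroup.mk (bpre ξ (J * wlen g + wlen g + 1))
      have e : b⁻¹ * g ^ j = (b⁻¹ * v) * ((g ^ j)⁻¹ * v)⁻¹ := by group
      rw [e]
      refine (wlen_mul_le _ _).trans ?_
      rw [wlen_inv (_ * v)]
      omega
    · by_contra hcon
      have : j * wlen g ≤ J * wlen g := Nat.mul_le_mul_right _ (by omega)
      omega
  have hch : ∀ k : ℕ, ∃ b ∈ B, k ∈ K → wlen (b⁻¹ * g ^ k) ≤ R + wlen g := by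
    intro k
    by_cases hk : k ∈ K
    · obtain ⟨b, hb, h⟩ := hk
      exact ⟨b, hb, fun _ => h⟩
    · exact ⟨1, one_mem _, fun h => absurd h hk⟩
  choose b hb hbK using hch
  obtain ⟨k, -, l, -, hkl, he⟩ := hK.exists_lt_map_eq_of_mapsTo
    (f := fun k => (b k)⁻¹ * g ^ k) (t := {x | wlen x ≤ R + wlen g})
    (fun k hk => hbK k hk) (finite_ball _)
  refine ⟨l - k, by omega, ?_⟩
  have e : g ^ (l - k) = b l * (b k)⁻¹ := by
    rw [pow_sub _ hkl.le]
    have : g ^ l = b l * ((b k)⁻¹ * g ^ k) := by rw [he]; group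
    rw [this]; group
  rw [e]
  exact mul_mem (hb l) (inv_mem (hb k))

lemma conjSub_fg {n : ℕ} (h : F n) (B : Subgroup (F n)) (hB : B.FG) : (conjSub h B).FG := by
  obtain ⟨S, rfl⟩ := hB
  refine ⟨S.image (MulAut.conj h).toMonoidHom, ?_⟩
  rw [conjSub, MonoidHom.map_closure, Finset.coe_image]

lemma mem_conjSub {n : ℕ} (h x : F n) (B : Subgroup (F n)) :
    x ∈ conjSub h B ↔ h⁻¹ * x * h ∈ B := by
  unfold conjSub
  rw [Subgroup.mem_map]
  constructor
  · rintro ⟨y, hy, rfl⟩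
    simpa [mul_assoc] using hy
  · intro hx
    exact ⟨_, hx, by simp [mul_assoc]⟩

lemma Peripheral.of_conj {n r : ℕ} {A : Fin r → Subgroup (F n)} {g : F n} (h : F n)
    (hp : Peripheral A (h * g * h⁻¹)) : Peripheral A g := by
  rcases hp with hp | ⟨B, ⟨i, x, rfl⟩, hB⟩
  · left
    simpa using hp
  · right
    refine ⟨conjSub (h⁻¹ * x) (A i), ⟨i, _, rfl⟩, ?_⟩
    rw [mem_conjSub] at hB ⊢
    convert hB using 1
    group

/-- The endpoints of the axis of a nonperipheral element form a point of `∂²(F_n,𝒜)`: otherwise a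
power of `g` lies in a conjugate of some `A i`, and then so does `g` by malnormality. -/
lemma mem_relSet {n r : ℕ} {A : Fin r → Subgroup (F n)} (hsys : IsSystem A)
    (hmal : SystemMalnormal A) {g : F n} (hg : ¬ Peripheral A g) {ξ η : Boundary n}
    (hξ : IsPosLimit g ξ) (hη : IsPosLimit g⁻¹ η) : s(ξ, η) ∈ relSet A := by
  have hg1 : g ≠ 1 := fun h => hg (Or.inl h)
  refine ⟨by simpa using posLimit_ne hg1 hξ hη, ?_⟩
  rintro ⟨i, h, ξ', η', he, h1, h2⟩
  have hmem : ξ ∈ limitSet (conjSub h (A i)) := by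
    rcases Sym2.eq_iff.1 he with ⟨rfl, -⟩ | ⟨rfl, -⟩ <;> assumption
  obtain ⟨k, hk, hgk⟩ := exists_pow_mem hξ _ (conjSub_fg h _ (hsys.1 i)) hmem
  apply hg
  right
  refine ⟨_, ⟨i, h, rfl⟩, ?_⟩
  rw [mem_conjSub] at hgk ⊢
  by_contra hx
  have hbot := hmal.1 i _ hx
  have hin : h⁻¹ * g ^ k * h ∈ conjSub (h⁻¹ * g * h) (A i) ⊓ A i := by
    refine ⟨?_, hgk⟩
    refine (mem_conjSub _ _ _).2 ?_
    convert hgk using 1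
    have : g⁻¹ * g ^ k * g = g ^ k := by
      rw [mul_assoc, ← pow_succ, pow_succ', inv_mul_cancel_left]
    conv_rhs => rw [← this]
    group
  rw [hbot, Subgroup.mem_bot] at hin
  have hone : g ^ k = 1 := by
    have : g ^ k = h * (h⁻¹ * g ^ k * h) * h⁻¹ := by group
    rw [this, hin]; group
  exact hg1 ((pow_eq_one_iff_left hk.ne').1 hone)

/-! ### Local finiteness of the orbit -/

/-- The classes `{α, β}` whose endpoints differ in one of the first `N` letters, that is, the
geodesics meeting the ball of radius `N - 1` about `1`. -/
def sepSet {n : ℕ} (N : ℕ) : Set (Sym2 (Boundary n)) :=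
  { z | ∃ α β : Boundary n, z = s(α, β) ∧ ∃ i < N, α.1 i ≠ β.1 i }

lemma mk_mem_sepSet {n : ℕ} (N : ℕ) (α β : Boundary n) :
    s(α, β) ∈ sepSet N ↔ ∃ i < N, α.1 i ≠ β.1 i := by
  constructor
  · rintro ⟨a, b, he, i, hi, hne⟩
    rcases Sym2.eq_iff.1 he with ⟨rfl, rfl⟩ | ⟨rfl, rfl⟩
    · exact ⟨i, hi, hne⟩
    · exact ⟨i, hi, hne.symm⟩
  · intro h
    exact ⟨α, β, rfl, h⟩

/-- If the geodesic `h · (g^{-∞}, g^{+∞})` comes close to `1`, so does some vertex `h g ^ k`: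
otherwise all these vertices, consecutive ones being at distance at most `|g|`, share their first
`N` letters. -/
lemma exists_zpow_near {n : ℕ} {g : F n} {ξ η : Boundary n} (hξ : IsPosLimit g ξ)
    (hη : IsPosLimit g⁻¹ η) (N : ℕ) (h : F n) (hN : ∃ i < N, (bAct h ξ).1 i ≠ (bAct h η).1 i) :
    ∃ k : ℤ, wlen (h * g ^ k) ≤ N + wlen g := by
  by_contra! hcon
  have hp : ∀ k : ℕ, (rword (h * g ^ k)).take N = (rword h).take N := by
    intro k
    induction k with
    | zero => simp
    | succ k ih =>
      rw [pow_succ, ← mul_assoc, take_mul, ih]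
      have := hcon k
      rw [zpow_natCast] at this
      exact this.le
  have hq : ∀ k : ℕ, (rword (h * g⁻¹ ^ k)).take N = (rword h).take N := by
    intro k
    induction k with
    | zero => simp
    | succ k ih =>
      rw [pow_succ, ← mul_assoc, take_mul, ih]
      have := hcon (-k)
      rw [zpow_neg, zpow_natCast, ← inv_pow] at this
      rw [wlen_inv]
      exact this.le
  have t1 : Tends (fun k => h * g ^ k) (bAct h ξ) := Tends.mul_left (x := fun k => g ^ k) hξ h
  have t2 : Tends (fun k => h * g⁻¹ ^ k) (bAct h η) := Tends.mul_left (x := fun k => g⁻¹ ^ k) hη h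
  obtain ⟨M1, h1⟩ := t1 N
  obtain ⟨M2, h2⟩ := t2 N
  have a := List.prefix_iff_eq_take.1 (h1 _ le_rfl)
  have b := List.prefix_iff_eq_take.1 (h2 _ le_rfl)
  simp only [bpre_length, hp, hq] at a b
  obtain ⟨i, hi, hne⟩ := hN
  exact hne ((bpre_eq_iff _ _ N).1 (a.trans b.symm) i hi)

lemma orbit_finite {n : ℕ} {g : F n} {ξ η : Boundary n} (hξ : IsPosLimit g ξ)
    (hη : IsPosLimit g⁻¹ η) (N : ℕ) :
    {z | z ∈ sepSet N ∧ ∃ h : F n, z = dbAct h s(ξ, η)}.Finite := by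
  refine ((finite_ball (n := n) (N + wlen g)).image (fun u => dbAct u s(ξ, η))).subset ?_
  rintro z ⟨hz, h, rfl⟩
  simp only [dbAct, Sym2.map_mk] at hz
  rw [mk_mem_sepSet] at hz
  obtain ⟨k, hk⟩ := exists_zpow_near hξ hη N h hz
  refine ⟨h * g ^ k, hk, ?_⟩
  simp only [← dbAct_mul]
  congr 1
  have h1 : bAct (g ^ k) ξ = ξ := hξ.bAct_eq ((Commute.refl g).zpow_left k)
  have h2 : bAct (g ^ k) η = η := hη.bAct_eq ((Commute.refl g).zpow_left k).inv_right
  simp [dbAct, h1, h2]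

lemma cyl_subset {n : ℕ} (g' w : F n) : dbAct g' '' cylinder w ⊆ sepSet (wlen g' + 1) := by
  rintro _ ⟨_, ⟨α, β, rfl, hne, -⟩, rfl⟩
  simp only [dbAct, Sym2.map_mk]
  rw [mk_mem_sepSet]
  by_contra! hcon
  apply hne
  have := bAct_zero_congr g'⁻¹ (bAct g' α) (bAct g' β)
    (by rw [wlen_inv]; exact (bpre_eq_iff _ _ _).2 hcon)
  simpa [bAct_mul, bAct_one] using this

/-! ### Topology and the counting measure -/

instance instBoundaryT2 {n : ℕ} : T2Space (Boundary n) :=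
  inferInstanceAs (T2Space { ξ : ℕ → Letter n // IsRed ξ })

instance instSymT1 {n : ℕ} : T1Space (Sym2 (Boundary n)) := by
  refine ⟨fun z => ?_⟩
  induction z using Sym2.ind with
  | h α β =>
    have hq : IsClosed ((fun p : Boundary n × Boundary n => s(p.1, p.2)) ⁻¹' {s(α, β)}) := by
      apply Set.Finite.isClosed
      apply (Set.toFinite {(α, β), (β, α)}).subset
      rintro ⟨a, b⟩ hab
      simpa using hab
    exact (isQuotientMap_quot_mk.isClosed_preimage).1 hq

lemma sepSet_open {n : ℕ} (N : ℕ) : IsOpen (sepSet (n := n) N) := by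
  have hq : IsOpen ((fun p : Boundary n × Boundary n => s(p.1, p.2)) ⁻¹' sepSet N) := by
    have e : ((fun p : Boundary n × Boundary n => s(p.1, p.2)) ⁻¹' sepSet N) =
        ⋃ i ∈ Set.Iio N, {p | p.1.1 i ≠ p.2.1 i} := by
      ext p
      simp [mk_mem_sepSet]
    rw [e]
    have hc : ∀ i, Continuous (fun a : Boundary n => a.1 i) := fun i =>
      (continuous_apply i).comp continuous_subtype_val
    exact isOpen_biUnion fun i _ =>
      isOpen_ne_fun ((hc i).comp continuous_fst) ((hc i).comp continuous_snd)
  exact (isQuotientMap_quot_mk.isOpen_preimage).1 hq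

instance instSymBorel {n : ℕ} : BorelSpace (Sym2 (Boundary n)) := ⟨rfl⟩

/-- The counting measure on a countable subset `O` of a T1 space covered by an increasing sequence
of open sets, each meeting `O` in a finite set, is regular: every subset of `O` is closed. -/
lemma count_regular {X : Type*} [TopologicalSpace X] [T1Space X] [MeasurableSpace X]
    [BorelSpace X] (O : Set X) (hO : O.Countable) (U : ℕ → Set X) (hU : ∀ N, IsOpen (U N))
    (hmono : Monotone U) (hcov : ⋃ N, U N = Set.univ) (hfin : ∀ N, (O ∩ U N).Finite) :
    (Measure.count.restrict O).Regular := by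
  have happ : ∀ s : Set X, Measure.count.restrict O s = ((s ∩ O).encard : ENNReal) := by
    intro s
    rw [Measure.restrict_apply' hO.measurableSet,
      Measure.count_apply (hO.mono Set.inter_subset_right).measurableSet]
  have hclosed : ∀ D ⊆ O, IsClosed D := by
    intro D hD
    have e : Dᶜ = ⋃ N, (U N \ (D ∩ U N)) := by
      ext x
      simp only [Set.mem_compl_iff, Set.mem_iUnion, Set.mem_sdiff, Set.mem_inter_iff, not_and]
      constructor
      · intro hx
        have : x ∈ ⋃ N, U N := hcov ▸ Set.mem_univ x
        obtain ⟨N, hN⟩ := Set.mem_iUnion.1 this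
        exact ⟨N, hN, fun h => absurd h hx⟩
      · rintro ⟨N, hN, h⟩ hx
        exact h hx hN
    rw [← isOpen_compl_iff, e]
    exact isOpen_iUnion fun N => (hU N).sdiff
      ((hfin N).subset (Set.inter_subset_inter_left _ hD)).isClosed
  refine { lt_top_of_isCompact := ?_, outerRegular := ?_, innerRegular := ?_ }
  · intro K hK
    obtain ⟨N, hN⟩ := hK.elim_directed_cover U hU (by rw [hcov]; exact Set.subset_univ _)
      (directed_of_isDirected_le hmono)
    have hf : (K ∩ O).Finite := (hfin N).subset fun x hx => ⟨hx.2, hN hx.1⟩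
    rw [happ]
    rw [← hf.cast_ncard_eq]
    simp
  · refine fun s _ r hr => ⟨(O \ s)ᶜ, ?_, (hclosed _ Set.sdiff_subset).isOpen_compl, ?_⟩
    · intro x hx h
      exact h.2 hx
    · refine lt_of_eq_of_lt ?_ hr
      rw [happ, happ]
      congr 2
      ext x
      simp only [Set.mem_inter_iff, Set.mem_compl_iff, Set.mem_sdiff]
      tauto
  · intro V _ r hr
    rw [happ] at hr
    by_cases hf : (V ∩ O).Finite
    · refine ⟨V ∩ O, Set.inter_subset_left, hf.isCompact, ?_⟩
      rw [happ, Set.inter_assoc, Set.inter_self]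
      exact hr
    · rw [Set.Infinite.encard_eq hf] at hr
      obtain ⟨k, hk⟩ := ENNReal.exists_nat_gt hr.ne_top
      obtain ⟨t, ht, hcard⟩ := Set.Infinite.exists_subset_card_eq hf k
      refine ⟨t, ht.trans Set.inter_subset_left, t.finite_toSet.isCompact, ?_⟩
      rw [happ, Set.inter_eq_left.2 (ht.trans Set.inter_subset_right),
        Set.encard_coe_eq_coe_finsetCard, hcard]
      simpa using hk

/-- The pair {g^{+∞}, g^{−∞}} of a nonperipheral, root-free element gives a point of
∂²(F_n,𝒜) whose orbit meets every translated cylinder finitely, and the counting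
measure on its orbit is a relative current. -/
theorem statement_15 (n r L : ℕ) (hn : 3 ≤ n) (A : Fin r → Subgroup (F n))
    (hsys : IsSystem A) (hmal : SystemMalnormal A) (hL : 1 ≤ L)
    (hdiam : DiamBound A L) (hbase : ∀ i, (1 : F n) ∈ treeVerts (A i))
    (g : F n) (hg : ¬ Peripheral A g) (hpp : ¬ IsProperPower g) :
    ∃ ξ η : Boundary n, IsPosLimit g ξ ∧ IsPosLimit g⁻¹ η ∧ ξ ≠ η ∧
      s(ξ, η) ∈ relSet A ∧
      (∀ w ∈ FmA A L, ∀ g' : F n, (orbitOf A s(ξ, η) ∩ relCylG A g' w).Finite) ∧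
      IsRelCurrent A (Measure.count.restrict (orbitOf A s(ξ, η))) := by
  have hg1 : g ≠ 1 := fun h => hg (Or.inl h)
  obtain ⟨ξ, hξ⟩ := exists_posLimit hg1
  obtain ⟨η, hη⟩ := exists_posLimit (inv_ne_one.2 hg1)
  have hrel : ∀ h : F n, dbAct h s(ξ, η) ∈ relSet A := by
    intro h
    have h2 := hη.bAct_conj h
    have e : h * g⁻¹ * h⁻¹ = (h * g * h⁻¹)⁻¹ := by group
    rw [e] at h2
    exact mem_relSet hsys hmal (fun hp => hg (hp.of_conj h)) (hξ.bAct_conj h) h2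
  have hsep : ∀ N, (orbitOf A s(ξ, η) ∩ Subtype.val ⁻¹' sepSet N).Finite := fun N =>
    ((orbit_finite hξ hη N).preimage Subtype.val_injective.injOn).subset
      fun y hy => ⟨hy.2, hy.1⟩
  have hcount : (orbitOf A s(ξ, η)).Countable := by
    refine (Set.countable_range fun h : F n =>
      (⟨dbAct h s(ξ, η), hrel h⟩ : ↥(relSet A))).mono ?_
    rintro y ⟨h, hy⟩
    exact ⟨h, Subtype.ext hy.symm⟩
  refine ⟨ξ, η, hξ, hη, posLimit_ne hg1 hξ hη, mem_relSet hsys hmal hg hξ hη, ?_, ?_, ?_⟩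
  · intro w _ g'
    exact (hsep (wlen g' + 1)).subset fun y hy => ⟨hy.1, cyl_subset g' w hy.2⟩
  · intro x s _
    have happ : ∀ s : Set ↥(relSet A), Measure.count.restrict (orbitOf A s(ξ, η)) s =
        ((s ∩ orbitOf A s(ξ, η)).encard : ENNReal) := by
      intro s
      rw [Measure.restrict_apply' hcount.measurableSet,
        Measure.count_apply (hcount.mono Set.inter_subset_right).measurableSet]
    have hval : ∀ y ∈ orbitOf A s(ξ, η), (relAct A x y).1 = dbAct x y.1 := by
      rintro y ⟨h, hy⟩
      have : dbAct x y.1 ∈ relSet A := by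
        rw [hy, dbAct_mul]
        exact hrel _
      rw [relAct, dif_pos this]
    rw [happ, happ]
    -- `relAct A x` restricts to a bijection from `(relAct A x)⁻¹ s ∩ orbit` onto `s ∩ orbit`
    have himg : relAct A x '' (relAct A x ⁻¹' s ∩ orbitOf A s(ξ, η)) =
        s ∩ orbitOf A s(ξ, η) := by
      ext y
      constructor
      · rintro ⟨y, ⟨hy1, hy2⟩, rfl⟩
        refine ⟨hy1, ?_⟩
        obtain ⟨h, hy⟩ := id hy2
        exact ⟨x * h, by rw [hval y hy2, hy, dbAct_mul]⟩
      · rintro ⟨hy1, h, hy⟩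
        let y' : ↥(relSet A) := ⟨dbAct (x⁻¹ * h) s(ξ, η), hrel _⟩
        have hy' : y' ∈ orbitOf A s(ξ, η) := ⟨_, rfl⟩
        have e : relAct A x y' = y := by
          apply Subtype.ext
          rw [hval y' hy', hy, dbAct_mul, mul_inv_cancel_left]
        exact ⟨y', ⟨by rw [Set.mem_preimage, e]; exact hy1, hy'⟩, e⟩
    rw [← himg, Set.InjOn.encard_image]
    rintro y ⟨-, hy⟩ z ⟨-, hz⟩ he
    have h1 := congrArg (fun t => dbAct x⁻¹ t.1) he
    simp only [hval y hy, hval z hz, dbAct_mul, inv_mul_cancel, dbAct_one] at h1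
    exact Subtype.ext h1
  · refine count_regular _ hcount (fun N => Subtype.val ⁻¹' sepSet N)
      (fun N => (sepSet_open N).preimage continuous_subtype_val) ?_ ?_ hsep
    · rintro N M hNM y ⟨a, b, he, i, hi, hne⟩
      exact ⟨a, b, he, i, hi.trans_le hNM, hne⟩
    -- distinct boundary points differ in some letter
    · refine Set.eq_univ_of_forall ?_
      rintro ⟨z, hz⟩
      induction z using Sym2.ind with
      | h a b =>
        have hab : a ≠ b := by simpa using hz.1
        obtain ⟨i, hi⟩ := Function.ne_iff.1 (fun h => hab (Subtype.ext h))
        exact Set.mem_iUnion.2 ⟨i + 1, a, b, rfl, i, Nat.lt_succ_self i, hi⟩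

end RelCurr
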